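/- Let g be a seven-dimensional real Lie algebra with a six-dimensional abelian ideal u and let e₇ ∈ g∖u. Then the following are equivalent: (i) there exists a closed four-form Ψ ∈ Λ⁴g* such that for some basis f¹,…,f⁷ of g*, Ψ = f^{1234}+f^{1256}+f^{3456}−f^{2467}+f^{2357}+f^{1457}+f^{1367} (i.e. g admits a cocalibrated G₂-structure); (ii) there exists a closed four-form Ω ∈ Λ⁴Ann(span(e₇)) of length l(Ω) = 3. -/

import Mathlib

open Module

section AltMachinery

variable {F : Type*} [Field F] {V : Type*} [AddCommGroup V] [Module F V]

/-- The wedge `φ₁ ∧ … ∧ φ_m` of `m` covectors, as an alternating `m`-form on `V`: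
`(φ₁ ∧ … ∧ φ_m)(v₁,…,v_m) = det (φ_i (v_j))`. -/
noncomputable def wedgeCov (m : ℕ) (φ : Fin m → Module.Dual F V) :
    V [⋀^Fin m]→ₗ[F] F :=
  (Matrix.detRowAlternating : (Fin m → F) [⋀^Fin m]→ₗ[F] F).compLinearMap
    (LinearMap.pi φ)

/-- A decomposable alternating `m`-form: a wedge of `m` covectors. -/
def AltDec (m : ℕ) (X : V [⋀^Fin m]→ₗ[F] F) : Prop :=
  ∃ φ : Fin m → Module.Dual F V, X = wedgeCov m φ

/-- The `m`-form `X` is a sum of `l` decomposable `m`-forms. -/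
def AltLenLE (m l : ℕ) (X : V [⋀^Fin m]→ₗ[F] F) : Prop :=
  ∃ Y : Fin l → (V [⋀^Fin m]→ₗ[F] F), (∀ i, AltDec m (Y i)) ∧ X = ∑ i, Y i

/-- The `m`-form `X` has length `l`: it is a sum of `l` decomposable `m`-forms and of no
smaller number of them. -/
def AltHasLen (m l : ℕ) (X : V [⋀^Fin m]→ₗ[F] F) : Prop :=
  AltLenLE m l X ∧ ∀ j < l, ¬ AltLenLE m j X

end AltMachinery

section CE

variable {F : Type*} [Field F] {g : Type*} [LieRing g] [LieAlgebra F g]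

/-- The Chevalley–Eilenberg differential of a `(k+1)`-form (given as a function on tuples):
`(dρ)(x₀,…,x_{k+1}) = ∑_{i<j} (-1)^{i+j} ρ(⁅x_i,x_j⁆, x₀,…,x̂_i,…,x̂_j,…,x_{k+1})`. -/
noncomputable def ceDiff (k : ℕ) (ρ : (Fin (k + 1) → g) → F) : (Fin (k + 2) → g) → F :=
  fun x => ∑ i : Fin (k + 2), ∑ j : Fin (k + 2),
    if h : (i : ℕ) < (j : ℕ) then
      (-1 : F) ^ ((i : ℕ) + (j : ℕ)) *
        ρ (Fin.cons ⁅x i, x j⁆ fun l : Fin k =>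
            x (j.succAbove ((⟨(i : ℕ),
              Nat.lt_of_lt_of_le h (Nat.lt_succ_iff.mp j.isLt)⟩ : Fin (k + 1)).succAbove l)))
    else 0

end CE

section G2Forms

variable {F : Type*} [Field F] {g : Type*} [AddCommGroup g] [Module F g]

/-- The wedge `f^i ∧ f^j ∧ f^k ∧ f^l` of four covectors from the basis `b` of `g*`. -/
noncomputable def bw (b : Basis (Fin 7) F (Module.Dual F g)) (i j k l : Fin 7) :
    g [⋀^Fin 4]→ₗ[F] F :=
  wedgeCov 4 ![b i, b j, b k, b l]

/-- The four-form `f^{1234}+f^{1256}+f^{3456}-f^{2467}+f^{2357}+f^{1457}+f^{1367}` (the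
Hodge dual of a `G₂`- resp. `(G₂)_ℂ`-structure), written with `0`-based indices. -/
noncomputable def stdG2 (b : Basis (Fin 7) F (Module.Dual F g)) : g [⋀^Fin 4]→ₗ[F] F :=
  bw b 0 1 2 3 + bw b 0 1 4 5 + bw b 2 3 4 5 - bw b 1 3 5 6 +
    bw b 1 2 4 6 + bw b 0 3 4 6 + bw b 0 2 5 6

/-- The four-form `f^{1234}-f^{1256}-f^{3456}-f^{2467}+f^{2357}+f^{1457}+f^{1367}` (the
Hodge dual of a `G₂*`-structure), written with `0`-based indices. -/
noncomputable def stdG2star (b : Basis (Fin 7) F (Module.Dual F g)) :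
    g [⋀^Fin 4]→ₗ[F] F :=
  bw b 0 1 2 3 - bw b 0 1 4 5 - bw b 2 3 4 5 - bw b 1 3 5 6 +
    bw b 1 2 4 6 + bw b 0 3 4 6 + bw b 0 2 5 6

/-- Membership in `Λ⁴W ⊆ Λ⁴g*` for a subspace `W ⊆ g*`: the span of the wedges of four
covectors from `W`. -/
def mem4Pow (W : Submodule F (Module.Dual F g)) (Ω : g [⋀^Fin 4]→ₗ[F] F) : Prop :=
  Ω ∈ Submodule.span F
    {Y : g [⋀^Fin 4]→ₗ[F] F |
      ∃ φ : Fin 4 → Module.Dual F g, (∀ i, φ i ∈ W) ∧ Y = wedgeCov 4 φ}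

end G2Forms


lemma ce_expl {g : Type*} [LieRing g] [LieAlgebra ℝ g] (ρ : (Fin 4 → g) → ℝ) (x : Fin 5 → g) :
    ceDiff 3 ρ x = 
      - ρ ![⁅x 0, x 1⁆, x 2, x 3, x 4] + ρ ![⁅x 0, x 2⁆, x 1, x 3, x 4]
      - ρ ![⁅x 0, x 3⁆, x 1, x 2, x 4] + ρ ![⁅x 0, x 4⁆, x 1, x 2, x 3]
      - ρ ![⁅x 1, x 2⁆, x 0, x 3, x 4] + ρ ![⁅x 1, x 3⁆, x 0, x 2, x 4]
      - ρ ![⁅x 1, x 4⁆, x 0, x 2, x 3] - ρ ![⁅x 2, x 3⁆, x 0, x 1, x 4]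
      + ρ ![⁅x 2, x 4⁆, x 0, x 1, x 3] - ρ ![⁅x 3, x 4⁆, x 0, x 1, x 2] := by
  have key : ∀ (v : g) (w : Fin 3 → g), ρ (@Fin.cons 3 (fun _ => g) v w) = ρ ![v, w 0, w 1, w 2] := by
    intro v w; congr 1; funext i; fin_cases i <;> rfl
  unfold ceDiff
  have e2 : ∀ f : Fin (3 + 2) → ℝ, ∑ i, f i = f 0 + f 1 + f 2 + f 3 + f 4 := Fin.sum_univ_five
  simp only [e2]
  simp
  simp only [key]
  simp [Fin.succAbove, Fin.lt_def]
  ring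

section four
variable {g : Type*} [AddCommGroup g] [Module ℝ g] (Ψ : g [⋀^Fin 4]→ₗ[ℝ] ℝ)

lemma f4_swap01 (a b c d : g) : Ψ ![b, a, c, d] = - Ψ ![a, b, c, d] := by
  rw [← Ψ.map_swap ![a, b, c, d] (show (0 : Fin 4) ≠ 1 by decide)]
  congr 1; funext i; fin_cases i <;> rfl
lemma f4_swap12 (a b c d : g) : Ψ ![a, c, b, d] = - Ψ ![a, b, c, d] := by
  rw [← Ψ.map_swap ![a, b, c, d] (show (1 : Fin 4) ≠ 2 by decide)]
  congr 1; funext i; fin_cases i <;> rfl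
lemma f4_swap23 (a b c d : g) : Ψ ![a, b, d, c] = - Ψ ![a, b, c, d] := by
  rw [← Ψ.map_swap ![a, b, c, d] (show (2 : Fin 4) ≠ 3 by decide)]
  congr 1; funext i; fin_cases i <;> rfl
lemma f4_add0 (a a' b c d : g) : Ψ ![a + a', b, c, d] = Ψ ![a, b, c, d] + Ψ ![a', b, c, d] :=
  Ψ.map_vecCons_add _ _ _
lemma f4_smul0 (r : ℝ) (a b c d : g) : Ψ ![r • a, b, c, d] = r * Ψ ![a, b, c, d] :=
  Ψ.map_vecCons_smul _ _ _
lemma f4_add1 (a a' b c d : g) : Ψ ![b, a + a', c, d] = Ψ ![b, a, c, d] + Ψ ![b, a', c, d] := by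
  rw [f4_swap01, f4_add0, f4_swap01 Ψ b a, f4_swap01 Ψ b a']; ring
lemma f4_smul1 (r : ℝ) (a b c d : g) : Ψ ![b, r • a, c, d] = r * Ψ ![b, a, c, d] := by
  rw [f4_swap01, f4_smul0, f4_swap01 Ψ b a]; ring
lemma f4_add2 (a a' b c d : g) : Ψ ![b, c, a + a', d] = Ψ ![b, c, a, d] + Ψ ![b, c, a', d] := by
  rw [f4_swap12, f4_add1, f4_swap12 Ψ b c a, f4_swap12 Ψ b c a']; ring
lemma f4_smul2 (r : ℝ) (a b c d : g) : Ψ ![b, c, r • a, d] = r * Ψ ![b, c, a, d] := by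
  rw [f4_swap12, f4_smul1, f4_swap12 Ψ b c a]; ring
lemma f4_add3 (a a' b c d : g) : Ψ ![b, c, d, a + a'] = Ψ ![b, c, d, a] + Ψ ![b, c, d, a'] := by
  rw [f4_swap23, f4_add2, f4_swap23 Ψ b c d a, f4_swap23 Ψ b c d a']; ring
lemma f4_smul3 (r : ℝ) (a b c d : g) : Ψ ![b, c, d, r • a] = r * Ψ ![b, c, d, a] := by
  rw [f4_swap23, f4_smul2, f4_swap23 Ψ b c d a]; ring
lemma f4_z01 (a b c : g) : Ψ ![a, a, b, c] = 0 := by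
  have := f4_swap01 Ψ a a b c; linarith
lemma f4_z12 (a b c : g) : Ψ ![b, a, a, c] = 0 := by
  have := f4_swap12 Ψ b a a c; linarith
lemma f4_z23 (a b c : g) : Ψ ![b, c, a, a] = 0 := by
  have := f4_swap23 Ψ b c a a; linarith

lemma f4_expand (v a b c e : g) (r s t : ℝ) :
    Ψ ![v, a + r • e, b + s • e, c + t • e] = Ψ ![v, a, b, c] + r * Ψ ![v, e, b, c]
      - s * Ψ ![v, e, a, c] + t * Ψ ![v, e, a, b] := by
  simp only [f4_add1, f4_add2, f4_add3, f4_smul1, f4_smul2, f4_smul3]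
  rw [f4_swap12 Ψ v e a c, f4_z12, f4_z12, f4_z23, f4_swap23 Ψ v e e b, f4_z12,
    f4_swap23 Ψ v a e b, f4_swap12 Ψ v e a b]
  ring
end four

lemma ce_congr {g : Type*} [LieRing g] [LieAlgebra ℝ g] (u : LieIdeal ℝ g)
    (habel : ∀ x ∈ u, ∀ y ∈ u, ⁅x, y⁆ = (0 : g)) (e : g) (θ : Module.Dual ℝ g)
    (hθ : ∀ x, x - θ x • e ∈ u) (Ψ Φ : g [⋀^Fin 4]→ₗ[ℝ] ℝ)
    (h : ∀ a ∈ u, ∀ b ∈ u, ∀ c ∈ u, ∀ d ∈ u, Ψ ![a, b, c, d] = Φ ![a, b, c, d]) :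
    ceDiff 3 ⇑Ψ = ceDiff 3 ⇑Φ := by
  funext x
  obtain ⟨p, hp⟩ : ∃ p : Fin 5 → g, ∀ i, p i ∈ u ∧ x i = p i + θ (x i) • e :=
    ⟨fun i => x i - θ (x i) • e, fun i => ⟨hθ _, by simp⟩⟩
  generalize ht : (fun i => θ (x i)) = t at *
  replace hp : ∀ i, p i ∈ u ∧ x i = p i + t i • e := by
    intro i; rw [← ht]; exact hp i
  obtain rfl : x = fun i => p i + t i • e := funext fun i => (hp i).2
  replace hp := fun i => (hp i).1
  have hA : ∀ i, ⁅e, p i⁆ ∈ u := fun i => lie_mem_right ℝ g u _ _ (hp i)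
  have hbr : ∀ i j, ⁅p i + t i • e, p j + t j • e⁆ = t i • ⁅e, p j⁆ + (- t j) • ⁅e, p i⁆ := by
    intro i j
    simp only [add_lie, lie_add, smul_lie, lie_smul, lie_self, habel _ (hp i) _ (hp j)]
    rw [← lie_skew (p i) e]
    module
  generalize hAd : (fun i => ⁅e, p i⁆) = A at *
  have hA' : ∀ i, ⁅e, p i⁆ = A i := fun i => congrFun hAd i
  simp only [hA'] at hA hbr
  have main : ∀ Ψ : g [⋀^Fin 4]→ₗ[ℝ] ℝ, ceDiff 3 ⇑Ψ (fun i => p i + t i • e) = 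
     - (t 0 * Ψ ![A 1, p 2, p 3, p 4] - t 1 * Ψ ![A 0, p 2, p 3, p 4])
     + (t 0 * Ψ ![A 2, p 1, p 3, p 4] - t 2 * Ψ ![A 0, p 1, p 3, p 4])
     - (t 0 * Ψ ![A 3, p 1, p 2, p 4] - t 3 * Ψ ![A 0, p 1, p 2, p 4])
     + (t 0 * Ψ ![A 4, p 1, p 2, p 3] - t 4 * Ψ ![A 0, p 1, p 2, p 3])
     - (t 1 * Ψ ![A 2, p 0, p 3, p 4] - t 2 * Ψ ![A 1, p 0, p 3, p 4])
     + (t 1 * Ψ ![A 3, p 0, p 2, p 4] - t 3 * Ψ ![A 1, p 0, p 2, p 4])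
     - (t 1 * Ψ ![A 4, p 0, p 2, p 3] - t 4 * Ψ ![A 1, p 0, p 2, p 3])
     - (t 2 * Ψ ![A 3, p 0, p 1, p 4] - t 3 * Ψ ![A 2, p 0, p 1, p 4])
     + (t 2 * Ψ ![A 4, p 0, p 1, p 3] - t 4 * Ψ ![A 2, p 0, p 1, p 3])
     - (t 3 * Ψ ![A 4, p 0, p 1, p 2] - t 4 * Ψ ![A 3, p 0, p 1, p 2]) := by
    intro Ψ
    rw [ce_expl]
    simp only [hbr, f4_expand, f4_add0, f4_smul0]
    ring
  rw [main, main]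
  have h' : ∀ i j k l, Ψ ![A i, p j, p k, p l] = Φ ![A i, p j, p k, p l] :=
    fun i j k l => h _ (hA i) _ (hp j) _ (hp k) _ (hp l)
  simp only [h']

section Len
variable {U : Type*} [AddCommGroup U] [Module ℝ U] {N : Type*} [AddCommGroup N] [Module ℝ N]

lemma len_comb (G : U →ₗ[ℝ] U →ₗ[ℝ] N) (hG : ∀ x, G x x = 0) (x y z : U) (a b : ℝ) :
    ∃ x' y', G x y + G z (a • x + b • y) = G x' y' := by
  have hs : ∀ x y, G x y = - G y x := by
    intro x y
    have := hG (x + y)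
    simp only [map_add, LinearMap.add_apply, hG] at this
    rw [eq_neg_iff_add_eq_zero]
    simpa [add_comm] using this
  by_cases ha : a = 0
  · by_cases hb : b = 0
    · exact ⟨x, y, by simp [ha, hb]⟩
    · refine ⟨b • y, - (b⁻¹ • x) - z, ?_⟩
      simp [ha, hs z y, hs y x, smul_smul, hb, sub_eq_add_neg]
  · refine ⟨a • x + b • y, a⁻¹ • y - z, ?_⟩
    rw [map_sub, hs z, sub_eq_add_neg]
    congr 1
    simp [smul_smul, ha, hG]

lemma len_step_last (G : U →ₗ[ℝ] U →ₗ[ℝ] N) (hG : ∀ x, G x x = 0) (n : ℕ)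
    (x y : Fin (n + 1) → U) (a b : Fin n → ℝ) (e : ℝ)
    (h : y (Fin.last n) = ∑ i, (a i • x i.castSucc + b i • y i.castSucc) + e • x (Fin.last n)) :
    ∃ x' y' : Fin n → U, ∑ i, G (x i) (y i) = ∑ i, G (x' i) (y' i) := by
  choose x' y' hxy using fun i : Fin n =>
    len_comb G hG (x i.castSucc) (y i.castSucc) (x (Fin.last n)) (a i) (b i)
  refine ⟨x', y', ?_⟩
  rw [Fin.sum_univ_castSucc, h, map_add, map_smul, hG, smul_zero, add_zero, map_sum,
    ← Finset.sum_add_distrib]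
  exact Finset.sum_congr rfl fun i _ => hxy i

lemma len_step (G : U →ₗ[ℝ] U →ₗ[ℝ] N) (hG : ∀ x, G x x = 0) (n : ℕ)
    (x y : Fin (n + 1) → U) (h : ¬ LinearIndependent ℝ (Sum.elim x y)) :
    ∃ x' y' : Fin n → U, ∑ i, G (x i) (y i) = ∑ i, G (x' i) (y' i) := by
  have hs : ∀ x y, G x y = - G y x := by
    intro x y
    have := hG (x + y)
    simp only [map_add, LinearMap.add_apply, hG] at this
    rw [eq_neg_iff_add_eq_zero]
    simpa [add_comm] using this
  -- the case of a nonzero coefficient at a y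
  have main : ∀ (x y : Fin (n + 1) → U) (a b : Fin (n + 1) → ℝ) (k : Fin (n + 1)), b k ≠ 0 →
      ∑ i, (a i • x i + b i • y i) = 0 →
      ∃ x' y' : Fin n → U, ∑ i, G (x i) (y i) = ∑ i, G (x' i) (y' i) := by
    intro x y a b k hk h0
    let σ := Equiv.swap k (Fin.last n)
    have h1 : ∑ i, (a (σ i) • x (σ i) + b (σ i) • y (σ i)) = 0 := by
      rw [← h0]; exact Equiv.sum_comp σ (fun i => a i • x i + b i • y i)
    have hσ : σ (Fin.last n) = k := Equiv.swap_apply_right _ _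
    obtain ⟨x', y', h2⟩ := len_step_last G hG n (x ∘ σ) (y ∘ σ)
      (fun i => - (b k)⁻¹ * a (σ i.castSucc)) (fun i => - (b k)⁻¹ * b (σ i.castSucc))
      (- (b k)⁻¹ * a k) (by
        rw [Fin.sum_univ_castSucc, hσ] at h1
        simp only [Function.comp, hσ]
        simp only [mul_smul, ← smul_add, ← Finset.smul_sum]
        have : b k • y k = - (∑ i : Fin n, (a (σ i.castSucc) • x (σ i.castSucc) +
          b (σ i.castSucc) • y (σ i.castSucc)) + a k • x k) := by
          rw [eq_neg_iff_add_eq_zero, ← h1]; abel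
        rw [neg_smul, ← smul_neg, ← this, smul_smul, inv_mul_cancel₀ hk, one_smul])
    refine ⟨x', y', ?_⟩
    rw [← h2]
    exact (Equiv.sum_comp σ (fun i => G (x i) (y i))).symm
  rw [Fintype.not_linearIndependent_iff] at h
  obtain ⟨c, hc, k, hk⟩ := h
  rw [Fintype.sum_sum_type] at hc
  simp only [Sum.elim_inl, Sum.elim_inr] at hc
  cases k with
  | inr k =>
    exact main x y (fun i => c (.inl i)) (fun i => c (.inr i)) k hk
      (by rw [Finset.sum_add_distrib]; exact hc)
  | inl k =>
    obtain ⟨x', y', h⟩ := main y x (fun i => c (.inr i)) (fun i => c (.inl i)) k hk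
      (by rw [Finset.sum_add_distrib, add_comm]; exact hc)
    refine ⟨y', x', ?_⟩
    rw [Finset.sum_congr rfl fun i _ => hs (x i) (y i), Finset.sum_neg_distrib, h,
      ← Finset.sum_neg_distrib]
    exact Finset.sum_congr rfl fun i _ => (hs _ _).symm

lemma len_desc [FiniteDimensional ℝ U] (hU : finrank ℝ U = 6) (G : U →ₗ[ℝ] U →ₗ[ℝ] N)
    (hG : ∀ x, G x x = 0) (n : ℕ) (x y : Fin (n + 3) → U) :
    ∃ x' y' : Fin 3 → U, ∑ i, G (x i) (y i) = ∑ i, G (x' i) (y' i) := by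
  induction n with
  | zero => exact ⟨x, y, rfl⟩
  | succ n ih =>
    obtain ⟨x1, y1, h1⟩ := len_step G hG (n + 3) x y (by
      intro h
      have := h.fintype_card_le_finrank
      simp [hU] at this
      omega)
    obtain ⟨x2, y2, h2⟩ := ih x1 y1
    exact ⟨x2, y2, h1.trans h2⟩

end Len

section Vol
variable {U : Type*} [AddCommGroup U] [Module ℝ U]

/-- `x, y ↦ vol(x,y,·,·,·,·)` -/
noncomputable def volG (vol : U [⋀^Fin 6]→ₗ[ℝ] ℝ) : U →ₗ[ℝ] U →ₗ[ℝ] U [⋀^Fin 4]→ₗ[ℝ] ℝ :=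
  (AlternatingMap.curryLeftLinearMap).comp vol.curryLeft

lemma volG_apply (vol : U [⋀^Fin 6]→ₗ[ℝ] ℝ) (x y : U) (v : Fin 4 → U) :
    volG vol x y v = vol (Matrix.vecCons x (Matrix.vecCons y v)) := rfl

lemma volG_self (vol : U [⋀^Fin 6]→ₗ[ℝ] ℝ) (x : U) : volG vol x x = 0 :=
  AlternatingMap.curryLeft_same _ _

lemma wedge_apply {V : Type*} [AddCommGroup V] [Module ℝ V] (φ : Fin 4 → Module.Dual ℝ V) (v : Fin 4 → V) :
    wedgeCov 4 φ v = (Matrix.of fun i j => φ j (v i)).det := rfl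

lemma volG_basis (vol : U [⋀^Fin 6]→ₗ[ℝ] ℝ) (b : Basis (Fin 6) ℝ U) :
    volG vol (b 0) (b 1) = vol b • wedgeCov 4 ![b.coord 2, b.coord 3, b.coord 4, b.coord 5] := by
  ext v
  rw [volG_apply, AlternatingMap.smul_apply, wedge_apply]
  conv_lhs => rw [AlternatingMap.eq_smul_basis_det b vol]
  rw [AlternatingMap.smul_apply, Basis.det_apply, ← Matrix.det_transpose, Matrix.det_succ_row_zero]
  congr 1
  rw [Fin.sum_univ_succ]
  rw [Finset.sum_eq_zero]
  · rw [Matrix.det_succ_row_zero, Fin.sum_univ_succ, Finset.sum_eq_zero]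
    · simp [Basis.toMatrix_apply]
      congr 1
      ext i j
      fin_cases j <;> simp [Basis.toMatrix_apply]
    · intro i _
      simp [Basis.toMatrix_apply]
      left
      fin_cases i <;> simp
  · intro i _
    simp [Basis.toMatrix_apply]
end Vol

section Dec
lemma alt_sum_apply {V : Type*} [AddCommGroup V] [Module ℝ V] {n m : ℕ}
    (Y : Fin n → V [⋀^Fin m]→ₗ[ℝ] ℝ) (v : Fin m → V) : (∑ i, Y i) v = ∑ i, Y i v := by
  have : ∀ s : Finset (Fin n), (∑ i ∈ s, Y i) v = ∑ i ∈ s, Y i v := by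
    intro s
    induction s using Finset.induction_on with
    | empty => simp
    | insert a s ha ih => rw [Finset.sum_insert ha, Finset.sum_insert ha, AlternatingMap.add_apply, ih]
  exact this _

lemma ext_basis {V : Type*} [AddCommGroup V] [Module ℝ V] [FiniteDimensional ℝ V] (m k : ℕ)
    (hV : finrank ℝ V = m + k) (v : Fin m → V) (hv : LinearIndependent ℝ v) :
    ∃ b : Basis (Fin (m + k)) ℝ V, ∀ i, b (Fin.castAdd k i) = v i := by
  classical
  let b0 := Basis.sumExtend hv
  have f1 : Finite (Fin m ⊕ Basis.sumExtendIndex hv) := Module.Finite.finite_basis b0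
  have f3 : Finite (Basis.sumExtendIndex hv) :=
    Finite.of_injective _ (Sum.inr_injective (α := Fin m))
  have f2 : Fintype (Basis.sumExtendIndex hv) := Fintype.ofFinite _
  have hc : Fintype.card (Basis.sumExtendIndex hv) = k := by
    have h1 := finrank_eq_card_basis b0
    rw [hV, Fintype.card_sum, Fintype.card_fin] at h1
    omega
  let e := Fintype.equivFinOfCardEq hc
  refine ⟨b0.reindex ((Equiv.sumCongr (Equiv.refl _) e).trans finSumFinEquiv), fun i => ?_⟩
  simp [Basis.reindex_apply, b0, Basis.sumExtend]
  rfl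

variable {U : Type*} [AddCommGroup U] [Module ℝ U] [FiniteDimensional ℝ U]

lemma volG_dec (hU : finrank ℝ U = 6) (vol : U [⋀^Fin 6]→ₗ[ℝ] ℝ) (x y : U) :
    AltDec 4 (volG vol x y) := by
  by_cases h : LinearIndependent ℝ ![x, y]
  · obtain ⟨b, hb⟩ := ext_basis 2 4 hU ![x, y] h
    have h0 : b 0 = x := hb 0
    have h1 : b 1 = y := hb 1
    have := volG_basis vol b
    rw [h0, h1] at this
    refine ⟨![vol b • b.coord 2, b.coord 3, b.coord 4, b.coord 5], ?_⟩
    rw [this]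
    ext v
    rw [AlternatingMap.smul_apply, wedge_apply, wedge_apply]
    simp [Matrix.det_succ_row_zero, Fin.sum_univ_succ, Fin.succAbove]
    ring
  · refine ⟨fun _ => 0, ?_⟩
    ext v
    rw [volG_apply, wedge_apply]
    have : Matrix.det (Matrix.of fun (i j : Fin 4) => (0 : Module.Dual ℝ U) (v i)) = 0 := 
      Matrix.det_eq_zero_of_row_eq_zero 0 (fun _ => rfl)
    rw [this]
    apply AlternatingMap.map_linearDependent
    intro h2
    apply h
    have := h2.comp (Fin.castLE (show 2 ≤ 6 by norm_num)) (Fin.castLE_injective _)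
    have e : ![x, y] = Matrix.vecCons x (Matrix.vecCons y v) ∘
        Fin.castLE (show 2 ≤ 6 by norm_num) := by
      funext i; fin_cases i <;> rfl
    rw [e]; exact this

lemma dec_volG (hU : finrank ℝ U = 6) (vol : U [⋀^Fin 6]→ₗ[ℝ] ℝ) (hvol : vol ≠ 0)
    (Y : U [⋀^Fin 4]→ₗ[ℝ] ℝ) (hY : AltDec 4 Y) : ∃ x y, Y = volG vol x y := by
  obtain ⟨φ, rfl⟩ := hY
  by_cases h : LinearIndependent ℝ φ
  · obtain ⟨b, hb⟩ := ext_basis 4 2 ((Subspace.dual_finrank_eq).trans hU) φ h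
    -- dual basis
    let c0 : Basis (Fin 6) ℝ U := b.dualBasis.map (Module.evalEquiv ℝ U).symm
    have hc0 : ∀ i j, b i (c0 j) = if i = j then 1 else 0 := by
      intro i j
      have : b i (c0 j) = (b.dualBasis j) (b i) := by
        simp only [c0, Basis.map_apply]
        rw [← Module.Dual.eval_apply, ← Module.evalEquiv_toLinearMap]
        simp
      rw [this, Basis.dualBasis_apply_self]
    let σ : Equiv.Perm (Fin 6) := finRotate 6 ^ 2
    let c : Basis (Fin 6) ℝ U := c0.reindex σ
    have hcoord : ∀ i, c.coord i = b (σ.symm i) := by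
      intro i
      refine c.ext fun j => ?_
      rw [Basis.coord_apply, Basis.repr_self]
      simp only [c, Basis.reindex_apply, hc0, Finsupp.single_apply]
      simp [eq_comm]
    have hk : vol c ≠ 0 := by
      intro h0
      apply hvol
      rw [AlternatingMap.eq_smul_basis_det c vol, h0, zero_smul]
    refine ⟨(vol c)⁻¹ • c 0, c 1, ?_⟩
    rw [map_smul, LinearMap.smul_apply, volG_basis, smul_smul, inv_mul_cancel₀ hk, one_smul]
    congr 1
    funext i
    rw [← hb i]
    fin_cases i
    · exact (congrArg b (by decide)).trans (hcoord 2).symm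
    · exact (congrArg b (by decide)).trans (hcoord 3).symm
    · exact (congrArg b (by decide)).trans (hcoord 4).symm
    · exact (congrArg b (by decide)).trans (hcoord 5).symm
  · refine ⟨0, 0, ?_⟩
    rw [volG_self]
    ext v
    rw [wedge_apply]
    by_contra hne
    apply h
    rw [Fintype.linearIndependent_iff]
    intro c hc
    have : (Matrix.of fun i j => φ j (v i)).mulVec c = 0 := by
      funext i
      have := congrArg (fun f => f (v i)) hc
      simpa [Matrix.mulVec, dotProduct, mul_comm] using this
    exact congrFun (Matrix.eq_zero_of_mulVec_eq_zero hne this)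

lemma lenLE_iff (hU : finrank ℝ U = 6) (vol : U [⋀^Fin 6]→ₗ[ℝ] ℝ) (hvol : vol ≠ 0) (n : ℕ)
    (Ω : U [⋀^Fin 4]→ₗ[ℝ] ℝ) :
    AltLenLE 4 n Ω ↔ ∃ x y : Fin n → U, Ω = ∑ i, volG vol (x i) (y i) := by
  constructor
  · rintro ⟨Y, hY, rfl⟩
    choose x y h using fun i => dec_volG hU vol hvol (Y i) (hY i)
    exact ⟨x, y, Finset.sum_congr rfl fun i _ => h i⟩
  · rintro ⟨x, y, rfl⟩
    exact ⟨_, fun i => volG_dec hU vol _ _, rfl⟩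

lemma exists_vol (hU : finrank ℝ U = 6) : ∃ vol : U [⋀^Fin 6]→ₗ[ℝ] ℝ, vol ≠ 0 := by
  let b := finBasisOfFinrankEq ℝ U hU
  exact ⟨b.det, b.det_ne_zero⟩

lemma len_desc' (hU : finrank ℝ U = 6) (n : ℕ) (Ω : U [⋀^Fin 4]→ₗ[ℝ] ℝ)
    (h : AltLenLE 4 (n + 3) Ω) : AltLenLE 4 3 Ω := by
  obtain ⟨vol, hvol⟩ := exists_vol hU
  rw [lenLE_iff hU vol hvol] at h ⊢
  obtain ⟨x, y, rfl⟩ := h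
  exact len_desc hU _ (volG_self vol) n x y

lemma degen (hU : finrank ℝ U = 6) (n : ℕ) (hn : n < 3) (Ω : U [⋀^Fin 4]→ₗ[ℝ] ℝ)
    (h : AltLenLE 4 n Ω) : ∃ α : Module.Dual ℝ U, α ≠ 0 ∧ 
      ∀ v : Fin 4 → U, (∀ i, α (v i) = 0) → Ω v = 0 := by
  obtain ⟨vol, hvol⟩ := exists_vol hU
  rw [lenLE_iff hU vol hvol] at h
  obtain ⟨x, y, rfl⟩ := h
  have hlt : Submodule.span ℝ (Set.range (Sum.elim x y)) < ⊤ := by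
    rw [lt_top_iff_ne_top]
    intro h
    have h1 := finrank_range_le_card (R := ℝ) (Sum.elim x y)
    rw [Set.finrank, h, finrank_top, hU] at h1
    simp at h1
    omega
  obtain ⟨α, hα, hle⟩ := Submodule.exists_le_ker_of_lt_top _ hlt
  refine ⟨α, hα, fun v hv => ?_⟩
  rw [alt_sum_apply]
  refine Finset.sum_eq_zero fun i _ => ?_
  rw [volG_apply]
  apply AlternatingMap.map_linearDependent
  intro hli
  have hspan := hli.span_eq_top_of_card_eq_finrank (by simp [hU])
  apply hα
  have hx : α (x i) = 0 := hle (Submodule.subset_span ⟨.inl i, rfl⟩)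
  have hy : α (y i) = 0 := hle (Submodule.subset_span ⟨.inr i, rfl⟩)
  have : (⊤ : Submodule ℝ U) ≤ LinearMap.ker α := by
    rw [← hspan, Submodule.span_le]
    rintro _ ⟨j, rfl⟩
    rw [SetLike.mem_coe, LinearMap.mem_ker]
    refine Fin.cases hx (fun j => Fin.cases hy (fun j => hv j) j) j
  ext w
  exact this (Submodule.mem_top (x := w))

lemma normal_form (hU : finrank ℝ U = 6) (Ω : U [⋀^Fin 4]→ₗ[ℝ] ℝ)
    (h3 : AltLenLE 4 3 Ω) (h2 : ¬ AltLenLE 4 2 Ω) :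
    ∃ (k : ℝ) (b : Basis (Fin 6) ℝ U), k ≠ 0 ∧
      Ω = k • (wedgeCov 4 ![b.coord 0, b.coord 1, b.coord 2, b.coord 3] +
        wedgeCov 4 ![b.coord 0, b.coord 1, b.coord 4, b.coord 5] +
        wedgeCov 4 ![b.coord 2, b.coord 3, b.coord 4, b.coord 5]) := by
  obtain ⟨vol, hvol⟩ := exists_vol hU
  rw [lenLE_iff hU vol hvol] at h2 h3
  obtain ⟨x, y, rfl⟩ := h3
  have hli : LinearIndependent ℝ (Sum.elim x y) := by
    by_contra h
    exact h2 (len_step _ (volG_self vol) 2 x y h)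
  let b : Basis (Fin 3 ⊕ Fin 3) ℝ U := basisOfLinearIndependentOfCardEqFinrank hli (by simp [hU])
  have hbx : ∀ i, b (.inl i) = x i := fun i => by simp [b]
  have hby : ∀ i, b (.inr i) = y i := fun i => by simp [b]
  let mk : (Fin 3 ⊕ Fin 3 → Fin 6) := Sum.elim ![0, 2, 4] ![1, 3, 5]
  let mki : Fin 6 → Fin 3 ⊕ Fin 3 := ![.inl 0, .inr 0, .inl 1, .inr 1, .inl 2, .inr 2]
  let E : Fin 3 ⊕ Fin 3 ≃ Fin 6 := ⟨mk, mki, by decide, by decide⟩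
  let c := b.reindex E
  have hk : vol c ≠ 0 := by
    intro h0
    apply hvol
    rw [AlternatingMap.eq_smul_basis_det c vol, h0, zero_smul]
  let σ : Equiv.Perm (Fin 6) := Equiv.swap 0 2 * Equiv.swap 1 3
  let τ : Equiv.Perm (Fin 6) := finRotate 6 ^ 2
  have key : ∀ ρ : Equiv.Perm (Fin 6), Equiv.Perm.sign ρ = 1 → 
      volG vol (c (ρ 0)) (c (ρ 1)) = vol c • wedgeCov 4 ![c.coord (ρ 2), c.coord (ρ 3), c.coord (ρ 4), c.coord (ρ 5)] := by
    intro ρ hρ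
    have := volG_basis vol (c.reindex ρ.symm)
    have hv : vol (c.reindex ρ.symm) = vol c := by
      have := vol.map_perm c ρ
      rw [hρ, one_smul] at this
      rw [← this]
      congr 1
      funext i; simp
    have hco : ∀ i, (c.reindex ρ.symm).coord i = c.coord (ρ i) := by
      intro i; ext w; simp
    rw [hv] at this
    simpa [hco] using this
  refine ⟨vol c, c, hk, ?_⟩
  have k0 := key 1 (by simp)
  have k1 := key σ (by decide)
  have k2 := key (τ ^ 2) (by decide)
  have c0 : c 0 = x 0 := (Basis.reindex_apply _ _ _).trans (hbx 0)
  have c1 : c 1 = y 0 := (Basis.reindex_apply _ _ _).trans (hby 0)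
  have c2 : c 2 = x 1 := (Basis.reindex_apply _ _ _).trans (hbx 1)
  have c3 : c 3 = y 1 := (Basis.reindex_apply _ _ _).trans (hby 1)
  have c4 : c 4 = x 2 := (Basis.reindex_apply _ _ _).trans (hbx 2)
  have c5 : c 5 = y 2 := (Basis.reindex_apply _ _ _).trans (hby 2)
  have s0 : σ 0 = 2 := by decide
  have s1 : σ 1 = 3 := by decide
  have s2 : σ 2 = 0 := by decide
  have s3 : σ 3 = 1 := by decide
  have s4 : σ 4 = 4 := by decide
  have s5 : σ 5 = 5 := by decide
  have t0 : (τ ^ 2) 0 = 4 := by decide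
  have t1 : (τ ^ 2) 1 = 5 := by decide
  have t2 : (τ ^ 2) 2 = 0 := by decide
  have t3 : (τ ^ 2) 3 = 1 := by decide
  have t4 : (τ ^ 2) 4 = 2 := by decide
  have t5 : (τ ^ 2) 5 = 3 := by decide
  simp only [Equiv.Perm.one_apply] at k0
  rw [s0, s1, s2, s3, s4, s5] at k1
  rw [t0, t1, t2, t3, t4, t5] at k2
  rw [Fin.sum_univ_three, ← c0, ← c1, ← c2, ← c3, ← c4, ← c5, k0, k1, k2, smul_add, smul_add]
  abel
end Dec

section Nondeg
variable {V : Type*} [AddCommGroup V] [Module ℝ V]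

lemma f4_expand4 (Ψ : V [⋀^Fin 4]→ₗ[ℝ] ℝ) (a b c d e : V) (q r s t : ℝ) :
    Ψ ![a + q • e, b + r • e, c + s • e, d + t • e] = Ψ ![a, b, c, d] + q * Ψ ![e, b, c, d]
      - r * Ψ ![e, a, c, d] + s * Ψ ![e, a, b, d] - t * Ψ ![e, a, b, c] := by
  rw [f4_expand, f4_add0, f4_add0, f4_add0, f4_add0]
  simp only [f4_smul0, f4_z01]
  rw [f4_swap01 Ψ e a c d, f4_swap01 Ψ e a b d, f4_swap01 Ψ e a b c]
  ring

lemma wedge_vanish (Ψ : V [⋀^Fin 4]→ₗ[ℝ] ℝ) (w : Fin 6 → V) (t s : Fin 6 → ℝ) (d a : V)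
    (hw : ∀ i j k l, Ψ ![w i, w j, w k, w l] = 0) (c : Fin 6 → V)
    (hc : ∀ i, c i = (w i + t i • d) + s i • a) :
    0 + (t 0 * s 1 - t 1 * s 0) * Ψ ![c 2, c 3, c 4, c 5]
      - (t 0 * s 2 - t 2 * s 0) * Ψ ![c 1, c 3, c 4, c 5]
      + (t 0 * s 3 - t 3 * s 0) * Ψ ![c 1, c 2, c 4, c 5]
      - (t 0 * s 4 - t 4 * s 0) * Ψ ![c 1, c 2, c 3, c 5]
      + (t 0 * s 5 - t 5 * s 0) * Ψ ![c 1, c 2, c 3, c 4]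
      + (t 1 * s 2 - t 2 * s 1) * Ψ ![c 0, c 3, c 4, c 5]
      - (t 1 * s 3 - t 3 * s 1) * Ψ ![c 0, c 2, c 4, c 5]
      + (t 1 * s 4 - t 4 * s 1) * Ψ ![c 0, c 2, c 3, c 5]
      - (t 1 * s 5 - t 5 * s 1) * Ψ ![c 0, c 2, c 3, c 4]
      + (t 2 * s 3 - t 3 * s 2) * Ψ ![c 0, c 1, c 4, c 5]
      - (t 2 * s 4 - t 4 * s 2) * Ψ ![c 0, c 1, c 3, c 5]
      + (t 2 * s 5 - t 5 * s 2) * Ψ ![c 0, c 1, c 3, c 4]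
      + (t 3 * s 4 - t 4 * s 3) * Ψ ![c 0, c 1, c 2, c 5]
      - (t 3 * s 5 - t 5 * s 3) * Ψ ![c 0, c 1, c 2, c 4]
      + (t 4 * s 5 - t 5 * s 4) * Ψ ![c 0, c 1, c 2, c 3] = 0 := by
  simp only [hc, f4_expand4]
  simp only [f4_expand, hw]
  ring
end Nondeg

section Val
/-- Explicit 4x4 determinant of the matrix of Kronecker deltas. -/
def d4 (I J : Fin 4 → Fin 7) : ℤ :=
  let m : Fin 4 → Fin 4 → ℤ := fun r s => if I s = J r then 1 else 0
  let q : Fin 4 → Fin 4 → ℤ := fun i j => m 2 i * m 3 j - m 2 j * m 3 i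
  m 0 0 * (m 1 1 * q 2 3 - m 1 2 * q 1 3 + m 1 3 * q 1 2)
  - m 0 1 * (m 1 0 * q 2 3 - m 1 2 * q 0 3 + m 1 3 * q 0 2)
  + m 0 2 * (m 1 0 * q 1 3 - m 1 1 * q 0 3 + m 1 3 * q 0 1)
  - m 0 3 * (m 1 0 * q 1 2 - m 1 1 * q 0 2 + m 1 2 * q 0 1)

def g2val (J : Fin 4 → Fin 7) : ℤ :=
  d4 ![0, 1, 2, 3] J + d4 ![0, 1, 4, 5] J + d4 ![2, 3, 4, 5] J - d4 ![1, 3, 5, 6] J +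
    d4 ![1, 2, 4, 6] J + d4 ![0, 3, 4, 6] J + d4 ![0, 2, 5, 6] J

lemma det4 (M : Matrix (Fin 4) (Fin 4) ℝ) : M.det =
  M 0 0 * (M 1 1 * (M 2 2 * M 3 3 - M 2 3 * M 3 2) - M 1 2 * (M 2 1 * M 3 3 - M 2 3 * M 3 1)
    + M 1 3 * (M 2 1 * M 3 2 - M 2 2 * M 3 1))
  - M 0 1 * (M 1 0 * (M 2 2 * M 3 3 - M 2 3 * M 3 2) - M 1 2 * (M 2 0 * M 3 3 - M 2 3 * M 3 0)
    + M 1 3 * (M 2 0 * M 3 2 - M 2 2 * M 3 0))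
  + M 0 2 * (M 1 0 * (M 2 1 * M 3 3 - M 2 3 * M 3 1) - M 1 1 * (M 2 0 * M 3 3 - M 2 3 * M 3 0)
    + M 1 3 * (M 2 0 * M 3 1 - M 2 1 * M 3 0))
  - M 0 3 * (M 1 0 * (M 2 1 * M 3 2 - M 2 2 * M 3 1) - M 1 1 * (M 2 0 * M 3 2 - M 2 2 * M 3 0)
    + M 1 2 * (M 2 0 * M 3 1 - M 2 1 * M 3 0)) := by
  simp [Matrix.det_succ_row_zero, Fin.sum_univ_succ, Fin.succAbove]
  ring

variable {V : Type*} [AddCommGroup V] [Module ℝ V]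

lemma bw_val (b : Basis (Fin 7) ℝ (Module.Dual ℝ V)) (c : Fin 7 → V)
    (hc : ∀ i j, b i (c j) = if i = j then 1 else 0) (i j k l : Fin 7) (J : Fin 4 → Fin 7) :
    bw b i j k l (fun r => c (J r)) = (d4 ![i, j, k, l] J : ℤ) := by
  have hd : ∀ x y, b x (c y) = ((if x = y then 1 else 0 : ℤ) : ℝ) := by
    intro x y; rw [hc]; split_ifs <;> simp
  have hm : ∀ r s, (![b i, b j, b k, b l] s) (c (J r)) =
      ((if ![i, j, k, l] s = J r then 1 else 0 : ℤ) : ℝ) := by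
    intro r s; rw [← hd]; fin_cases s <;> rfl
  rw [bw, wedge_apply, det4]
  simp only [Matrix.of_apply, hm]
  unfold d4
  push_cast
  rfl

lemma g2_val (b : Basis (Fin 7) ℝ (Module.Dual ℝ V)) (c : Fin 7 → V)
    (hc : ∀ i j, b i (c j) = if i = j then 1 else 0) (p q r s : Fin 7) (z : ℤ)
    (hz : g2val ![p, q, r, s] = z) :
    stdG2 b ![c p, c q, c r, c s] = z := by
  have : ![c p, c q, c r, c s] = fun i => c (![p, q, r, s] i) := by
    funext i; fin_cases i <;> rfl
  rw [this, ← hz]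
  simp only [stdG2, AlternatingMap.add_apply, AlternatingMap.sub_apply, bw_val b c hc, g2val]
  push_cast
  rfl

lemma g2_cross (b : Basis (Fin 7) ℝ (Module.Dual ℝ V)) (c : Fin 7 → V)
    (hc : ∀ i j, b i (c j) = if i = j then 1 else 0) (w : Fin 7 → V) (t s : Fin 7 → ℝ) (d a : V)
    (hw : ∀ i j k l, stdG2 b ![w i, w j, w k, w l] = 0)
    (hcw : ∀ i, c i = (w i + t i • d) + s i • a) :
    0 + (t 1 * s 6 - t 6 * s 1) + (t 2 * s 4 - t 4 * s 2) - (t 3 * s 5 - t 5 * s 3) = 0 ∧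
    0 + (t 0 * s 6 - t 6 * s 0) + (t 2 * s 5 - t 5 * s 2) + (t 3 * s 4 - t 4 * s 3) = 0 ∧
    0 - (t 0 * s 4 - t 4 * s 0) + (t 1 * s 5 - t 5 * s 1) + (t 3 * s 6 - t 6 * s 3) = 0 ∧
    0 - (t 0 * s 5 - t 5 * s 0) - (t 1 * s 4 - t 4 * s 1) + (t 2 * s 6 - t 6 * s 2) = 0 ∧
    0 + (t 0 * s 2 - t 2 * s 0) - (t 1 * s 3 - t 3 * s 1) + (t 5 * s 6 - t 6 * s 5) = 0 ∧
    0 + (t 0 * s 3 - t 3 * s 0) + (t 1 * s 2 - t 2 * s 1) + (t 4 * s 6 - t 6 * s 4) = 0 ∧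
    0 + (t 0 * s 1 - t 1 * s 0) + (t 2 * s 3 - t 3 * s 2) + (t 4 * s 5 - t 5 * s 4) = 0 := by
  have v0123 := g2_val b c hc 0 1 2 3 1 (by decide)
  have v0124 := g2_val b c hc 0 1 2 4 0 (by decide)
  have v0125 := g2_val b c hc 0 1 2 5 0 (by decide)
  have v0126 := g2_val b c hc 0 1 2 6 0 (by decide)
  have v0134 := g2_val b c hc 0 1 3 4 0 (by decide)
  have v0135 := g2_val b c hc 0 1 3 5 0 (by decide)
  have v0136 := g2_val b c hc 0 1 3 6 0 (by decide)
  have v0145 := g2_val b c hc 0 1 4 5 1 (by decide)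
  have v0146 := g2_val b c hc 0 1 4 6 0 (by decide)
  have v0156 := g2_val b c hc 0 1 5 6 0 (by decide)
  have v0234 := g2_val b c hc 0 2 3 4 0 (by decide)
  have v0235 := g2_val b c hc 0 2 3 5 0 (by decide)
  have v0236 := g2_val b c hc 0 2 3 6 0 (by decide)
  have v0245 := g2_val b c hc 0 2 4 5 0 (by decide)
  have v0246 := g2_val b c hc 0 2 4 6 0 (by decide)
  have v0256 := g2_val b c hc 0 2 5 6 1 (by decide)
  have v0345 := g2_val b c hc 0 3 4 5 0 (by decide)
  have v0346 := g2_val b c hc 0 3 4 6 1 (by decide)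
  have v0356 := g2_val b c hc 0 3 5 6 0 (by decide)
  have v0456 := g2_val b c hc 0 4 5 6 0 (by decide)
  have v1234 := g2_val b c hc 1 2 3 4 0 (by decide)
  have v1235 := g2_val b c hc 1 2 3 5 0 (by decide)
  have v1236 := g2_val b c hc 1 2 3 6 0 (by decide)
  have v1245 := g2_val b c hc 1 2 4 5 0 (by decide)
  have v1246 := g2_val b c hc 1 2 4 6 1 (by decide)
  have v1256 := g2_val b c hc 1 2 5 6 0 (by decide)
  have v1345 := g2_val b c hc 1 3 4 5 0 (by decide)
  have v1346 := g2_val b c hc 1 3 4 6 0 (by decide)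
  have v1356 := g2_val b c hc 1 3 5 6 (-1) (by decide)
  have v1456 := g2_val b c hc 1 4 5 6 0 (by decide)
  have v2345 := g2_val b c hc 2 3 4 5 1 (by decide)
  have v2346 := g2_val b c hc 2 3 4 6 0 (by decide)
  have v2356 := g2_val b c hc 2 3 5 6 0 (by decide)
  have v2456 := g2_val b c hc 2 4 5 6 0 (by decide)
  have v3456 := g2_val b c hc 3 4 5 6 0 (by decide)
  have W := fun σ : Fin 6 → Fin 7 => wedge_vanish (stdG2 b) (fun i => w (σ i)) (fun i => t (σ i))
    (fun i => s (σ i)) d a (fun i j k l => hw _ _ _ _) (fun i => c (σ i)) (fun i => hcw _)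
  have W0 := W ![1, 2, 3, 4, 5, 6]
  have W1 := W ![0, 2, 3, 4, 5, 6]
  have W2 := W ![0, 1, 3, 4, 5, 6]
  have W3 := W ![0, 1, 2, 4, 5, 6]
  have W4 := W ![0, 1, 2, 3, 5, 6]
  have W5 := W ![0, 1, 2, 3, 4, 6]
  have W6 := W ![0, 1, 2, 3, 4, 5]
  clear W
  simp only [Matrix.cons_val] at W0
  rw [v1234, v1235, v1236, v1245, v1246, v1256, v1345, v1346, v1356, v1456, v2345, v2346, v2356, v2456, v3456] at W0
  simp only [Matrix.cons_val] at W1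
  rw [v0234, v0235, v0236, v0245, v0246, v0256, v0345, v0346, v0356, v0456, v2345, v2346, v2356, v2456, v3456] at W1
  simp only [Matrix.cons_val] at W2
  rw [v0134, v0135, v0136, v0145, v0146, v0156, v0345, v0346, v0356, v0456, v1345, v1346, v1356, v1456, v3456] at W2
  simp only [Matrix.cons_val] at W3
  rw [v0124, v0125, v0126, v0145, v0146, v0156, v0245, v0246, v0256, v0456, v1245, v1246, v1256, v1456, v2456] at W3
  simp only [Matrix.cons_val] at W4
  rw [v0123, v0125, v0126, v0135, v0136, v0156, v0235, v0236, v0256, v0356, v1235, v1236, v1256, v1356, v2356] at W4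
  simp only [Matrix.cons_val] at W5
  rw [v0123, v0124, v0126, v0134, v0136, v0146, v0234, v0236, v0246, v0346, v1234, v1236, v1246, v1346, v2346] at W5
  simp only [Matrix.cons_val] at W6
  rw [v0123, v0124, v0125, v0134, v0135, v0145, v0234, v0235, v0245, v0345, v1234, v1235, v1245, v1345, v2345] at W6
  push_cast at W0 W1 W2 W3 W4 W5 W6
  exact ⟨by linarith, by linarith, by linarith, by linarith, by linarith, by linarith, by linarith⟩

lemma g2_nondeg (b : Basis (Fin 7) ℝ (Module.Dual ℝ V)) (c : Fin 7 → V)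
    (hc : ∀ i j, b i (c j) = if i = j then 1 else 0) (w : Fin 7 → V) (t s : Fin 7 → ℝ) (d a : V)
    (hw : ∀ i j k l, stdG2 b ![w i, w j, w k, w l] = 0)
    (hcw : ∀ i, c i = (w i + t i • d) + s i • a) :
    ∀ i, (∑ j, s j ^ 2) * t i = (∑ j, t j * s j) * s i := by
  obtain ⟨h0, h1, h2, h3, h4, h5, h6⟩ := g2_cross b c hc w t s d a hw hcw
  have lag : (∑ j, t j ^ 2) * (∑ j, s j ^ 2) - (∑ j, t j * s j) ^ 2 = 0 := by
    simp only [Fin.sum_univ_seven]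
    have : ∀ a b c d e f g : ℝ, a = 0 → b = 0 → c = 0 → d = 0 → e = 0 → f = 0 → g = 0 →
      a ^ 2 + b ^ 2 + c ^ 2 + d ^ 2 + e ^ 2 + f ^ 2 + g ^ 2 = 0 := by
      intros; subst_vars; norm_num
    rw [← this _ _ _ _ _ _ _ h0 h1 h2 h3 h4 h5 h6]
    ring
  have hsum : ∑ i, ((∑ j, s j ^ 2) * t i - (∑ j, t j * s j) * s i) ^ 2 = 0 := by
    have : ∑ i, ((∑ j, s j ^ 2) * t i - (∑ j, t j * s j) * s i) ^ 2 =
      (∑ j, s j ^ 2) * ((∑ j, t j ^ 2) * (∑ j, s j ^ 2) - (∑ j, t j * s j) ^ 2) := by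
      generalize hA : ∑ j, s j ^ 2 = A
      generalize hB : ∑ j, t j * s j = B
      generalize hC : ∑ j, t j ^ 2 = C
      have e : ∀ i, (A * t i - B * s i) ^ 2 = A ^ 2 * t i ^ 2 - 2 * A * B * (t i * s i) + B ^ 2 * s i ^ 2 := by
        intro i; ring
      simp only [e, Finset.sum_add_distrib, Finset.sum_sub_distrib, ← Finset.mul_sum, hA, hB, hC]
      ring
    rw [this, lag, mul_zero]
  intro i
  rw [Finset.sum_eq_zero_iff_of_nonneg (fun i _ => sq_nonneg _)] at hsum
  have := hsum i (Finset.mem_univ _)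
  exact sub_eq_zero.mp (pow_eq_zero_iff (two_ne_zero) |>.mp this)
end Val

section Assemble

lemma wedge_scale {V W : Type*} [AddCommGroup V] [Module ℝ V] [AddCommGroup W] [Module ℝ W]
    (φ : Fin 4 → Module.Dual ℝ V) (ψ : Fin 4 → Module.Dual ℝ W) (v : Fin 4 → V) (x : Fin 4 → W)
    (l : ℝ) (h : ∀ s r, φ s (v r) = l * ψ s (x r)) : wedgeCov 4 φ v = l ^ 4 * wedgeCov 4 ψ x := by
  rw [wedge_apply, wedge_apply]
  have : (Matrix.of fun i j => φ j (v i)) = l • (Matrix.of fun i j => ψ j (x i)) := by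
    ext i j; simp [h]
  rw [this, Matrix.det_smul]
  simp

lemma bw_last {V : Type*} [AddCommGroup V] [Module ℝ V] (b : Basis (Fin 7) ℝ (Module.Dual ℝ V))
    (i j k : Fin 7) (v : Fin 4 → V) (h : ∀ r, b 6 (v r) = 0) : bw b i j k 6 v = 0 := by
  rw [bw, wedge_apply]
  exact Matrix.det_eq_zero_of_column_eq_zero 3 (fun r => h r)

lemma wedge_comp {V W : Type*} [AddCommGroup V] [Module ℝ V] [AddCommGroup W] [Module ℝ W]
    (φ : Fin 4 → Module.Dual ℝ V) (f : W →ₗ[ℝ] V) :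
    (wedgeCov 4 φ).compLinearMap f = wedgeCov 4 (fun i => (φ i).comp f) := rfl

lemma sum_comp {V W : Type*} [AddCommGroup V] [Module ℝ V] [AddCommGroup W] [Module ℝ W]
    {n : ℕ} (Y : Fin n → V [⋀^Fin 4]→ₗ[ℝ] ℝ) (f : W →ₗ[ℝ] V) :
    (∑ i, Y i).compLinearMap f = ∑ i, (Y i).compLinearMap f := by
  ext v
  rw [AlternatingMap.compLinearMap_apply, alt_sum_apply, alt_sum_apply]
  rfl

lemma lenLE_comp {V W : Type*} [AddCommGroup V] [Module ℝ V] [AddCommGroup W] [Module ℝ W]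
    {n : ℕ} {X : V [⋀^Fin 4]→ₗ[ℝ] ℝ} (h : AltLenLE 4 n X) (f : W →ₗ[ℝ] V) :
    AltLenLE 4 n (X.compLinearMap f) := by
  obtain ⟨Y, hY, rfl⟩ := h
  refine ⟨fun i => (Y i).compLinearMap f, fun i => ?_, sum_comp Y f⟩
  obtain ⟨φ, hφ⟩ := hY i
  refine ⟨fun j => (φ j).comp f, ?_⟩
  change (Y i).compLinearMap f = _
  rw [hφ, wedge_comp]

lemma lenLE_mem {V W : Type*} [AddCommGroup V] [Module ℝ V] [AddCommGroup W] [Module ℝ W]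
    {n : ℕ} {X : V [⋀^Fin 4]→ₗ[ℝ] ℝ} (h : AltLenLE 4 n X) (f : W →ₗ[ℝ] V) (e : W) (he : f e = 0) :
    mem4Pow (LinearMap.ker (Module.Dual.eval ℝ W e)) (X.compLinearMap f) := by
  obtain ⟨Y, hY, rfl⟩ := h
  rw [sum_comp]
  refine Submodule.sum_mem _ fun i _ => Submodule.subset_span ?_
  obtain ⟨φ, hφ⟩ := hY i
  refine ⟨fun j => (φ j).comp f, fun j => ?_, by rw [hφ, wedge_comp]⟩
  simp [he]

lemma mem_comp {V : Type*} [AddCommGroup V] [Module ℝ V]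
    {X : V [⋀^Fin 4]→ₗ[ℝ] ℝ} (e : V) (θ : Module.Dual ℝ V) (Q : V →ₗ[ℝ] V)
    (hQ : ∀ x, Q x = x - θ x • e)
    (h : mem4Pow (LinearMap.ker (Module.Dual.eval ℝ V e)) X) : X.compLinearMap Q = X := by
  refine Submodule.span_induction (p := fun X _ => X.compLinearMap Q = X) ?_ ?_ ?_ ?_ h
  · rintro _ ⟨φ, hφ, rfl⟩
    rw [wedge_comp]
    congr 1
    funext i
    ext x
    have : φ i e = 0 := by simpa using hφ i
    simp [hQ, this]
  · rfl
  · intro x y _ _ hx hy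
    rw [AlternatingMap.add_compLinearMap, hx, hy]
  · intro a x _ hx
    ext v
    exact congrArg (fun r => a * r) (congrArg (fun f => f v) hx)

lemma stdG2_len {V : Type*} [AddCommGroup V] [Module ℝ V]
    (b : Basis (Fin 7) ℝ (Module.Dual ℝ V)) : AltLenLE 4 7 (stdG2 b) := by
  have hn : - bw b 1 3 5 6 = wedgeCov 4 ![- b 1, b 3, b 5, b 6] := by
    ext v
    rw [AlternatingMap.neg_apply, bw, wedge_apply, wedge_apply, det4, det4]
    simp
    ring
  refine ⟨![bw b 0 1 2 3, bw b 0 1 4 5, bw b 2 3 4 5, - bw b 1 3 5 6, bw b 1 2 4 6, bw b 0 3 4 6,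
    bw b 0 2 5 6], fun i => ?_, ?_⟩
  · fin_cases i
    all_goals first | exact ⟨_, hn⟩ | exact ⟨_, rfl⟩
  · rw [Fin.sum_univ_seven, stdG2, sub_eq_add_neg]; rfl

lemma predual {V : Type*} [AddCommGroup V] [Module ℝ V] [FiniteDimensional ℝ V]
    (b : Basis (Fin 7) ℝ (Module.Dual ℝ V)) :
    ∃ c : Basis (Fin 7) ℝ V, ∀ i j, b i (c j) = if i = j then 1 else 0 := by
  refine ⟨b.dualBasis.map (Module.evalEquiv ℝ V).symm, fun i j => ?_⟩
  have : b i ((b.dualBasis.map (Module.evalEquiv ℝ V).symm) j) = (b.dualBasis j) (b i) := by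
    simp only [Basis.map_apply]
    rw [← Module.Dual.eval_apply, ← Module.evalEquiv_toLinearMap]
    simp
  rw [this, Basis.dualBasis_apply_self]

lemma g2_no_degen {V : Type*} [AddCommGroup V] [Module ℝ V] [FiniteDimensional ℝ V]
    (b : Basis (Fin 7) ℝ (Module.Dual ℝ V)) (θ β : Module.Dual ℝ V) (e : V) (hθ : θ e = 1)
    (hβ : β e = 0) (hne : β ≠ 0)
    (h : ∀ v : Fin 4 → V, (∀ i, θ (v i) = 0) → (∀ i, β (v i) = 0) → stdG2 b v = 0) : False := by
  obtain ⟨c, hc⟩ := predual b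
  obtain ⟨a, ha, ha'⟩ : ∃ a, β a = 1 ∧ θ a = 0 := by
    obtain ⟨a, ha⟩ : ∃ a, β a ≠ 0 := by
      by_contra hh
      push Not at hh
      exact hne (LinearMap.ext hh)
    refine ⟨(β a)⁻¹ • (a - θ a • e), ?_, ?_⟩
    · simp [hβ, ha]
    · simp [hθ]
  let w : Fin 7 → V := fun i => c i - θ (c i) • e - β (c i) • a
  have hwt : ∀ i, θ (w i) = 0 := fun i => by simp [w, hθ, ha']
  have hwb : ∀ i, β (w i) = 0 := fun i => by simp [w, hβ, ha]
  have key := g2_nondeg b c hc w (fun i => θ (c i)) (fun i => β (c i)) e a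
    (fun i j k l => h _ (by intro r; fin_cases r <;> simp [hwt])
      (by intro r; fin_cases r <;> simp [hwb]))
    (fun i => by simp only [w]; module)
  generalize hS : ∑ j, β (c j) ^ 2 = S at key
  generalize ∑ j, θ (c j) * β (c j) = T at key
  have heq : S • θ = T • β := c.ext fun i => by simpa using key i
  have h1 := congrArg (fun f => f e) heq
  simp [hθ, hβ] at h1
  rw [h1, Finset.sum_eq_zero_iff_of_nonneg (fun i _ => sq_nonneg _)] at hS
  apply hne
  refine c.ext fun i => ?_
  have := hS i (Finset.mem_univ _)
  simpa using this

end Assemble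

/-- Let `g` be a seven-dimensional real Lie algebra with a
six-dimensional abelian ideal `u` and `e₇ ∈ g ∖ u`.  Then `g` admits a cocalibrated
`G₂`-structure (a closed four-form of the standard type `stdG2`) iff there is a closed
four-form `Ω ∈ Λ⁴Ann(span e₇)` of length `3`. -/
theorem stmt13 {g : Type*} [LieRing g] [LieAlgebra ℝ g] [FiniteDimensional ℝ g]
    (hg : finrank ℝ g = 7)
    (u : LieIdeal ℝ g) (habel : ∀ x ∈ u, ∀ y ∈ u, ⁅x, y⁆ = (0 : g))
    (hu : finrank ℝ ↥u = 6) (e₇ : g) (he : e₇ ∉ u) :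
    (∃ Ψ : g [⋀^Fin 4]→ₗ[ℝ] ℝ, ceDiff 3 ⇑Ψ = 0 ∧
        ∃ b : Basis (Fin 7) ℝ (Module.Dual ℝ g), Ψ = stdG2 b) ↔
      (∃ Ω : g [⋀^Fin 4]→ₗ[ℝ] ℝ, ceDiff 3 ⇑Ω = 0 ∧
        mem4Pow (LinearMap.ker (Module.Dual.eval ℝ g e₇)) Ω ∧ AltHasLen 4 3 Ω) := by
  classical
  obtain ⟨θ0, hθ0, hle⟩ := Submodule.exists_le_ker_of_notMem (p := u.toSubmodule) (v := e₇) he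
  obtain ⟨θ, hθe, hθu⟩ : ∃ θ : Module.Dual ℝ g, θ e₇ = 1 ∧ ∀ x ∈ u, θ x = 0 :=
    ⟨(θ0 e₇)⁻¹ • θ0, by simp [hθ0], fun x hx => by
      have : θ0 x = 0 := hle hx
      simp [this]⟩
  have hker : u.toSubmodule = LinearMap.ker θ := by
    apply Submodule.eq_of_le_of_finrank_eq (fun x hx => hθu x hx)
    have h1 := LinearMap.finrank_range_add_finrank_ker θ
    have h2 : finrank ℝ (LinearMap.range θ) = 1 := by
      have : LinearMap.range θ = ⊤ := by
        rw [LinearMap.range_eq_top]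
        intro r
        exact ⟨r • e₇, by simp [hθe]⟩
      rw [this, finrank_top, finrank_self]
    have h3 : finrank ℝ u.toSubmodule = 6 := hu
    omega
  have hPu : ∀ x, x - θ x • e₇ ∈ u := by
    intro x
    have : x - θ x • e₇ ∈ u.toSubmodule := by
      rw [hker]; simp [hθe]
    exact this
  have hU : finrank ℝ u.toSubmodule = 6 := hu
  let ι : u.toSubmodule →ₗ[ℝ] g := u.toSubmodule.subtype
  let Q : g →ₗ[ℝ] g := LinearMap.id - θ.smulRight e₇
  have hQ : ∀ x, Q x = x - θ x • e₇ := fun x => by simp [Q]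
  let P : g →ₗ[ℝ] u.toSubmodule := LinearMap.codRestrict u.toSubmodule Q
    (fun x => by rw [hQ]; exact hPu x)
  have hιP : ι.comp P = Q := by ext x; rfl
  have hPe : P e₇ = 0 := by
    apply Subtype.ext
    change Q e₇ = 0
    rw [hQ, hθe]; simp
  have hPι : ∀ x, P (ι x) = x := by
    intro x
    apply Subtype.ext
    change Q x = x
    rw [hQ, hθu x x.2]; simp
  have hPι' : P.comp ι = LinearMap.id := LinearMap.ext hPι
  constructor
  · rintro ⟨Ψ, hcl, b, rfl⟩
    have hcomp : (((stdG2 b).compLinearMap ι).compLinearMap P).compLinearMap ι =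
        (stdG2 b).compLinearMap ι := by
      ext v
      simp [hPι]
    have hlen7 := lenLE_comp (stdG2_len b) ι
    refine ⟨((stdG2 b).compLinearMap ι).compLinearMap P, ?_, lenLE_mem hlen7 P e₇ hPe, ?_, ?_⟩
    · rw [← hcl]
      apply ce_congr u habel e₇ θ hPu
      intro x hx y hy z hz w hw
      have := congrArg (fun f => f ![⟨x, hx⟩, ⟨y, hy⟩, ⟨z, hz⟩, ⟨w, hw⟩]) hcomp
      have hv : (fun i => ι ((![⟨x, hx⟩, ⟨y, hy⟩, ⟨z, hz⟩, ⟨w, hw⟩] : Fin 4 → u.toSubmodule) i)) =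
          ![x, y, z, w] := by
        funext i; fin_cases i <;> rfl
      rw [← hv]
      exact this
    · exact lenLE_comp (len_desc' hU 4 _ hlen7) P
    · intro j hj hlen
      have h1 := lenLE_comp hlen ι
      rw [hcomp] at h1
      obtain ⟨α, hα, hv⟩ := degen hU j hj _ h1
      refine g2_no_degen b θ (α.comp P) e₇ hθe (by simp [hPe]) ?_ ?_
      · intro h0
        apply hα
        ext x
        have := congrArg (fun f => f (ι x)) h0
        simpa [hPι] using this
      · intro v h1 h2
        have h3 := hv (fun i => P (v i)) h2
        have h4 : (fun i => ι (P (v i))) = v := by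
          funext i
          change Q (v i) = v i
          rw [hQ, h1]; simp
        rw [← h4]
        exact h3
  · rintro ⟨Ω, hcl, hmem, hlen3, hlen⟩
    have hΩ : (Ω.compLinearMap ι).compLinearMap P = Ω := by
      exact mem_comp e₇ θ Q hQ hmem
    obtain ⟨k, c, hk, hnf⟩ := normal_form hU (Ω.compLinearMap ι) (lenLE_comp hlen3 ι) (by
      intro h
      apply hlen 2 (by norm_num)
      rw [← hΩ]
      exact lenLE_comp h P)
    let l : ℝ := Real.sqrt (Real.sqrt |k|)
    have hl4 : l ^ 4 = |k| := by
      have : l ^ 4 = (l ^ 2) ^ 2 := by ring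
      rw [this, Real.sq_sqrt (Real.sqrt_nonneg _), Real.sq_sqrt (abs_nonneg _)]
    have hl : l ≠ 0 := by
      intro h
      rw [h] at hl4
      have : |k| = 0 := by rw [← hl4]; norm_num
      exact hk (abs_eq_zero.mp this)
    obtain ⟨s, hs⟩ : ∃ s : ℝ, s * k = |k| := by
      rcases abs_choice k with h | h
      · exact ⟨1, by rw [h]; ring⟩
      · exact ⟨-1, by rw [h]; ring⟩
    let F : Fin 7 → Module.Dual ℝ g := Fin.snoc (fun i : Fin 6 => l • (c.coord i).comp P) θ
    have hF : ∀ i : Fin 6, F i.castSucc = l • (c.coord i).comp P := fun i => by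
      simp only [F, Fin.snoc_castSucc]
    have hF6 : F (Fin.last 6) = θ := by simp only [F, Fin.snoc_last]
    have hli : LinearIndependent ℝ F := by
      rw [Fintype.linearIndependent_iff]
      intro a ha
      rw [Fin.sum_univ_castSucc] at ha
      simp only [hF, hF6] at ha
      have h6 : a (Fin.last 6) = 0 := by
        have := congrArg (fun f => f e₇) ha
        simpa [hPe, hθe] using this
      refine Fin.lastCases h6 fun i => ?_
      have := congrArg (fun f => f (ι (c i))) ha
      have h7 : θ (ι (c i)) = 0 := hθu _ (c i).2
      simp [h7, hPι, Finsupp.single_apply, hl] at this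
      exact this
    let B : Basis (Fin 7) ℝ (Module.Dual ℝ g) := basisOfLinearIndependentOfCardEqFinrank hli
      (by rw [Subspace.dual_finrank_eq, hg]; simp)
    have hB : ∀ i, B i = F i := fun i => by simp [B]
    have hB6 : ∀ x : u.toSubmodule, B 6 (ι x) = 0 := by
      intro x
      rw [hB]
      exact (congrArg (fun f => f (ι x)) hF6).trans (hθu x x.2)
    have hBi : ∀ (i : Fin 6) (x : u.toSubmodule), B i.castSucc (ι x) = l * c.coord i x := by
      intro i x
      rw [hB, hF]
      simp [hPι]
    refine ⟨stdG2 B, ?_, B, rfl⟩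
    have hsc : ceDiff 3 ⇑(s • Ω) = 0 := by
      funext x
      have := congrFun hcl x
      rw [ce_expl] at this ⊢
      simp only [AlternatingMap.smul_apply, smul_eq_mul, Pi.zero_apply] at this ⊢
      linear_combination s * this
    rw [← hsc]
    apply ce_congr u habel e₇ θ hPu
    intro x hx y hy z hz w hw
    let v : Fin 4 → u.toSubmodule := ![⟨x, hx⟩, ⟨y, hy⟩, ⟨z, hz⟩, ⟨w, hw⟩]
    have hv : (fun i => ι (v i)) = ![x, y, z, w] := by
      funext i; fin_cases i <;> rfl
    rw [← hv]
    have hR : (s • Ω) (fun i => ι (v i)) = s * (Ω.compLinearMap ι) v := rfl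
    have hbw : ∀ i j p q : Fin 6, bw B i.castSucc j.castSucc p.castSucc q.castSucc
        (fun i => ι (v i)) = l ^ 4 * wedgeCov 4 ![c.coord i, c.coord j, c.coord p, c.coord q] v := by
      intro i j p q
      apply wedge_scale
      intro t r
      fin_cases t <;> exact hBi _ _
    have hlast : ∀ i j p, bw B i j p 6 (fun i => ι (v i)) = 0 := fun i j p =>
      bw_last B i j p _ (fun r => hB6 _)
    rw [hR, hnf]
    simp only [stdG2, AlternatingMap.add_apply, AlternatingMap.sub_apply, AlternatingMap.smul_apply,
      hlast, smul_eq_mul]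
    have e1 : bw B 0 1 2 3 (fun i => ι (v i)) = _ := hbw 0 1 2 3
    have e2 : bw B 0 1 4 5 (fun i => ι (v i)) = _ := hbw 0 1 4 5
    have e3 : bw B 2 3 4 5 (fun i => ι (v i)) = _ := hbw 2 3 4 5
    rw [hl4, ← hs] at e1 e2 e3
    linear_combination e1 + e2 + e3
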